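/- Every non-Hamiltonian bridgeless graph of order n ≥ 5 with at least n + 3 edges has an orientation of diameter at most n - 2. -/

import Mathlib

open SimpleGraph

/-- `R` is an orientation of the simple graph `G`: every arc of `R` lies on an edge of `G`,
and every edge of `G` receives exactly one of its two possible directions. -/
def IsOrientation {V : Type*} (G : SimpleGraph V) (R : V → V → Prop) : Prop :=
  (∀ u v, R u v → G.Adj u v) ∧ ∀ u v, G.Adj u v → (R u v ↔ ¬ R v u)

/-- `RelPow R k u v` : there is a directed walk of length `k` from `u` to `v`. -/
def RelPow {V : Type*} (R : V → V → Prop) : ℕ → V → V → Prop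
  | 0, u, v => u = v
  | n + 1, u, v => ∃ w, R u w ∧ RelPow R n w v

/-- The digraph `R` has diameter at most `d`: any vertex can reach any other by a
directed walk of length at most `d`. -/
def DiamLE {V : Type*} (R : V → V → Prop) (d : ℕ) : Prop :=
  ∀ u v, ∃ k ≤ d, RelPow R k u v

/-- A digraph is strongly connected if every vertex can reach every other. -/
def StronglyConnected {V : Type*} (R : V → V → Prop) : Prop :=
  ∀ u v, Relation.ReflTransGen R u v

/-- A graph is bridgeless if it is connected and contains no bridge. -/
def Bridgeless {V : Type*} (G : SimpleGraph V) : Prop :=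
  G.Connected ∧ ∀ e, ¬ G.IsBridge e

/-- The graph `G_{n,d}`: the path `u_1 … u_d` is the set of indices `0,…,d-1`,
the clique `K_{n-d-1}` is the set of indices `d,…,n-2`, both endpoints `0` and `d-1`
of the path are joined to all clique vertices, and the extra vertex `u_3'` is the
index `n-1`, joined to `u_2, u_3, u_4`, i.e. to indices `1, 2, 3`. -/
def Gnd (n d : ℕ) : SimpleGraph (Fin n) :=
  SimpleGraph.fromRel (fun i j =>
    ((i : ℕ) + 1 = (j : ℕ) ∧ (j : ℕ) < d) ∨
    (d ≤ (i : ℕ) ∧ (i : ℕ) < n - 1 ∧ d ≤ (j : ℕ) ∧ (j : ℕ) < n - 1) ∨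
    (((i : ℕ) = 0 ∨ (i : ℕ) = d - 1) ∧ d ≤ (j : ℕ) ∧ (j : ℕ) < n - 1) ∨
    ((i : ℕ) = n - 1 ∧ ((j : ℕ) = 1 ∨ (j : ℕ) = 2 ∨ (j : ℕ) = 3)))

/-- The graph `H_{n,n-2}`: the cycle `u_1 … u_{n-1} u_1` is the set of indices
`0,…,n-2` in cyclic order, and the extra vertex `u_3'` is the index `n-1`,
joined to `u_2, u_3, u_4`, i.e. to indices `1, 2, 3`. -/
def Hgraph (n : ℕ) : SimpleGraph (Fin n) :=
  SimpleGraph.fromRel (fun i j =>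
    ((i : ℕ) + 1 = (j : ℕ) ∧ (j : ℕ) ≤ n - 2) ∨
    ((i : ℕ) = 0 ∧ (j : ℕ) = n - 2) ∨
    ((i : ℕ) = n - 1 ∧ ((j : ℕ) = 1 ∨ (j : ℕ) = 2 ∨ (j : ℕ) = 3)))

/-!
Suppose that no orientation has diameter at most `n - 2`. Then every strong orientation, also of a
spanning subgraph, has a source all of whose distance layers are singletons. For the orientation
given by Robbins' theorem this yields a Hamiltonian path `0, …, n - 1`. Its remaining edges, the
chords, cross every cut of the path, there are at least four of them as `m ≥ n + 3`, and none joins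
`0` to `n - 1` because the graph is not Hamiltonian. Take the greedy chain of farthest reaching
chords, directed backwards, and direct the path forwards, or towards a peak if that lets further
chords be added. A vertex with two out-neighbours constrains the source, since only one of the two
can lie in the next layer, and in each case the two or more such vertices ask for incompatible
positions of the source.
-/

section Orientations

variable {V : Type*} {G : SimpleGraph V} {R S : V → V → Prop}

/-- A partial orientation of `G` directs some of the edges of `G`, each in at most one way: it is
an orientation of a spanning subgraph of `G`. -/
structure IsPartialOrientation (G : SimpleGraph V) (R : V → V → Prop) : Prop where
  adj {x y : V} : R x y → G.Adj x y
  asymm {x y : V} : R x y → ¬ R y x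

lemma IsOrientation.isPartialOrientation (hR : IsOrientation G R) : IsPartialOrientation G R where
  adj {x y} := hR.1 x y
  asymm {x y} hxy := (hR.2 x y (hR.1 x y hxy)).1 hxy

lemma IsPartialOrientation.exists_isOrientation_le (hR : IsPartialOrientation G R) :
    ∃ S, IsOrientation G S ∧ R ≤ S := by
  refine ⟨fun x y => R x y ∨ G.Adj x y ∧ ¬ R y x ∧ WellOrderingRel x y,
    ⟨fun x y => Or.rec hR.adj And.left, fun x y hxy => ?_⟩, fun x y => Or.inl⟩
  have hxy' := hxy.symm
  have hR₁ := hR.asymm (x := x) (y := y)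
  have htri := trichotomous_of WellOrderingRel x y
  have hasymm := asymm_of WellOrderingRel (a := x) (b := y)
  have hne := hxy.ne
  tauto

lemma StronglyConnected.of_forall_reflTransGen (hR : StronglyConnected R)
    (h : ∀ x y, R x y → Relation.ReflTransGen S x y) : StronglyConnected S := fun u v =>
  Relation.reflTransGen_closed h _ _ (hR u v)

lemma StronglyConnected.exists_arc_of_mem_of_notMem (hR : StronglyConnected R) {P : Set V}
    {u v : V} (hu : u ∈ P) (hv : v ∉ P) : ∃ x ∈ P, ∃ y ∉ P, R x y := by
  by_contra! h
  have hclosed {w : V} (hw : Relation.ReflTransGen R u w) : w ∈ P := by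
    induction hw with
    | refl => exact hu
    | tail _ hxy hx => exact by_contra fun hy => h _ hx _ hy hxy
  exact hv (hclosed (hR u v))

end Orientations

section Robbins

variable {V : Type*} {G : SimpleGraph V} {R Q : V → V → Prop} {u v x : V}

/-- A strongly connected digraph on the edges of `G` that uses every edge in at least one of its
two directions. A minimal one is a strong orientation when `G` is bridgeless. -/
structure IsStrongCover (G : SimpleGraph V) (R : V → V → Prop) : Prop where
  adj {x y : V} : R x y → G.Adj x y
  arc_or_arc {x y : V} : G.Adj x y → R x y ∨ R y x
  strong : StronglyConnected R

lemma isStrongCover_adj (hG : G.Connected) : IsStrongCover G G.Adj where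
  adj := id
  arc_or_arc := Or.inl
  strong u v := (G.reachable_iff_reflTransGen u v).1 (hG u v)

lemma reflTransGen_or_of_arc_or_target (hRQ : ∀ x y, R x y → Q x y ∨ y = u ∨ y = v)
    (hux : Relation.ReflTransGen R u x) :
    Relation.ReflTransGen Q u x ∨ Relation.ReflTransGen Q v x := by
  induction hux with
  | refl => exact Or.inl .refl
  | tail _ hxy ih =>
    rcases hRQ _ _ hxy with hQ | rfl | rfl
    · exact ih.imp (·.tail hQ) (·.tail hQ)
    · exact Or.inl .refl
    · exact Or.inr .refl

lemma reflTransGen_or_of_arc_or_source (hRQ : ∀ x y, R x y → Q x y ∨ x = u ∨ x = v)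
    (hxu : Relation.ReflTransGen R x u) :
    Relation.ReflTransGen Q x u ∨ Relation.ReflTransGen Q x v := by
  simp only [← Relation.reflTransGen_swap (r := Q)]
  exact reflTransGen_or_of_arc_or_target (R := Function.swap R) (fun x y => hRQ y x)
    (Relation.reflTransGen_swap.2 hxu)

-- The set of vertices reachable from `u` would otherwise be a cut of `G` crossed only by `uv`.
lemma IsStrongCover.reflTransGen_or_of_not_isBridge (hR : IsStrongCover G R)
    (huv : ¬ G.IsBridge s(u, v))
    (hRQ : ∀ x y, R x y → s(x, y) ≠ s(u, v) → Q x y) :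
    Relation.ReflTransGen Q u v ∨ Relation.ReflTransGen Q v u := by
  by_contra! h
  obtain ⟨huv', hvu'⟩ := h
  have hend {x y : V} (hxy : R x y) : Q x y ∨ (x = u ∨ x = v) ∧ (y = u ∨ y = v) := by
    by_cases he : s(x, y) = s(u, v)
    · have := Sym2.eq_iff.1 he
      tauto
    · exact Or.inl (hRQ x y hxy he)
  rw [isBridge_iff, not_not] at huv
  obtain ⟨walk⟩ := huv
  obtain ⟨⟨⟨x, y⟩, hxy⟩, -, hx, hy⟩ :=
    walk.exists_boundary_dart {w | Relation.ReflTransGen Q u w} .refl huv'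
  rw [deleteEdges_adj, Set.mem_singleton_iff] at hxy
  have hyx : Q y x := by
    rcases hR.arc_or_arc hxy.1 with hR' | hR'
    · exact absurd (hx.tail (hRQ x y hR' hxy.2)) hy
    · exact hRQ y x hR' (Sym2.eq_swap ▸ hxy.2)
  have hvx : Relation.ReflTransGen Q v x :=
    ((reflTransGen_or_of_arc_or_target (fun x y h => (hend h).imp_right And.right)
      (hR.strong u y)).resolve_left hy).tail hyx
  rcases reflTransGen_or_of_arc_or_source (fun x y h => (hend h).imp_right And.left)
    (hR.strong x u) with hxu | hxv
  · exact hvu' (hvx.trans hxu)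
  · exact huv' (hx.trans hxv)

lemma IsStrongCover.deleteArc (hR : IsStrongCover G R) (hvu : R v u)
    (huv : Relation.ReflTransGen (fun x y => R x y ∧ s(x, y) ≠ s(u, v)) u v) :
    IsStrongCover G (fun x y => R x y ∧ ¬ (x = u ∧ y = v)) where
  adj h := hR.adj h.1
  arc_or_arc {x y} hxy := by
    have hne := hxy.ne
    rcases hR.arc_or_arc hxy with h | h
    · by_cases he : x = u ∧ y = v <;> grind
    · by_cases he : y = u ∧ x = v <;> grind
  strong := hR.strong.of_forall_reflTransGen fun x y hxy => by
    by_cases he : x = u ∧ y = v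
    · obtain ⟨rfl, rfl⟩ := he
      have hle : (fun a b => R a b ∧ s(a, b) ≠ s(x, y)) ≤ fun a b => R a b ∧ ¬ (a = x ∧ b = y) :=
        fun a b h => ⟨h.1, fun he => h.2 (by rw [he.1, he.2])⟩
      exact Relation.ReflTransGen.mono hle _ _ huv
    · exact .single ⟨hxy, he⟩

/-- **Robbins' theorem**. -/
theorem Bridgeless.exists_isOrientation_stronglyConnected [Finite V] (hG : Bridgeless G) :
    ∃ R, IsOrientation G R ∧ StronglyConnected R := by
  obtain ⟨R, hR⟩ : ∃ R, Minimal (IsStrongCover G) R :=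
    (Set.toFinite {R | IsStrongCover G R}).exists_minimal
      ⟨G.Adj, isStrongCover_adj hG.1⟩
  have hkeep {u v : V} (huv : R u v) (hvu : R v u) :
      ¬ Relation.ReflTransGen (fun x y => R x y ∧ s(x, y) ≠ s(u, v)) u v := fun hreach =>
    (hR.le_of_le (hR.prop.deleteArc hvu hreach) (fun _ _ => And.left) u v huv).2 ⟨rfl, rfl⟩
  have hasymm {u v : V} (huv : R u v) : ¬ R v u := fun hvu => by
    rcases hR.prop.reflTransGen_or_of_not_isBridge (hG.2 s(u, v)) (fun _ _ => And.intro)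
      with h | h
    · exact hkeep huv hvu h
    · exact hkeep hvu huv (by simpa only [Sym2.eq_swap (a := v)] using h)
  exact ⟨R, ⟨fun _ _ => hR.prop.adj, fun u v huv =>
    ⟨hasymm, (hR.prop.arc_or_arc huv).resolve_right⟩⟩, hR.prop.strong⟩

end Robbins

section Distance

variable {V W : Type*} {R S : V → V → Prop} {s u v x y : V} {f : V → ℕ} {k m : ℕ}

lemma relPow_succ_iff_exists_last :
    RelPow R (k + 1) u v ↔ ∃ w, RelPow R k u w ∧ R w v := by
  induction k generalizing u with
  | zero => simp [RelPow]
  | succ k ih =>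
    change (∃ x, R u x ∧ RelPow R (k + 1) x v) ↔ ∃ w, (∃ x, R u x ∧ RelPow R k x w) ∧ R w v
    simp only [ih]
    tauto

lemma RelPow.mono (hRS : R ≤ S) (huv : RelPow R k u v) : RelPow S k u v := by
  induction k generalizing u with
  | zero => exact huv
  | succ k ih =>
    obtain ⟨w, huw, hwv⟩ := huv
    exact ⟨w, hRS u w huw, ih hwv⟩

lemma RelPow.comap {S : W → W → Prop} (e : V ≃ W) (huv : RelPow S k (e u) (e v)) :
    RelPow (fun x y => S (e x) (e y)) k u v := by
  induction k generalizing u with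
  | zero => exact e.injective huv
  | succ k ih =>
    obtain ⟨w, huw, hwv⟩ := huv
    rw [← e.apply_symm_apply w] at huw hwv
    exact ⟨e.symm w, huw, ih hwv⟩

lemma StronglyConnected.exists_relPow (hR : StronglyConnected R) (u v : V) :
    ∃ k, RelPow R k u v := by
  induction hR u v with
  | refl => exact ⟨0, rfl⟩
  | tail _ hxy ih =>
    obtain ⟨k, hk⟩ := ih
    exact ⟨k + 1, relPow_succ_iff_exists_last.2 ⟨_, hk, hxy⟩⟩

/-- `f` is the directed distance from the source `s` in the digraph `R`. It is characterised
locally: `f` grows by at most one along each arc, and by exactly one along some arc into each vertex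
other than `s`. -/
structure IsDistFrom (R : V → V → Prop) (s : V) (f : V → ℕ) : Prop where
  source : f s = 0
  le_succ {x y : V} : R x y → f y ≤ f x + 1
  exists_pred {y : V} : y ≠ s → ∃ x, R x y ∧ f y = f x + 1

lemma StronglyConnected.exists_isDistFrom (hR : StronglyConnected R) (s : V) :
    ∃ f, IsDistFrom R s f := by
  classical
  have hreach := hR.exists_relPow s
  have hmin {x : V} {k : ℕ} (hk : RelPow R k s x) : Nat.find (hreach x) ≤ k := Nat.find_min' _ hk
  refine ⟨fun x => Nat.find (hreach x), (Nat.find_eq_zero _).2 rfl, fun {x y} hxy => ?_,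
    fun {y} hy => ?_⟩
  · exact hmin (relPow_succ_iff_exists_last.2 ⟨x, Nat.find_spec (hreach x), hxy⟩)
  · obtain ⟨k, hk⟩ : ∃ k, Nat.find (hreach y) = k + 1 :=
      Nat.exists_eq_succ_of_ne_zero fun h0 => hy ((Nat.find_eq_zero _).1 h0).symm
    obtain ⟨x, hsx, hxy⟩ := relPow_succ_iff_exists_last.1 (hk ▸ Nat.find_spec (hreach y))
    have hle : Nat.find (hreach y) ≤ Nat.find (hreach x) + 1 :=
      hmin (relPow_succ_iff_exists_last.2 ⟨x, Nat.find_spec (hreach x), hxy⟩)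
    have hge := hmin hsx
    exact ⟨x, hxy, by lia⟩

namespace IsDistFrom

lemma relPow (hf : IsDistFrom R s f) (x : V) : RelPow R (f x) s x := by
  induction hk : f x generalizing x with
  | zero =>
    by_contra hx
    obtain ⟨w, -, hw⟩ := hf.exists_pred (Ne.symm hx)
    lia
  | succ k ih =>
    obtain ⟨w, hwx, hw⟩ := hf.exists_pred (y := x) fun hx => by grind [hf.source]
    exact relPow_succ_iff_exists_last.2 ⟨w, ih w (by lia), hwx⟩

lemma exists_eq_of_le (hf : IsDistFrom R s f) (hm : m ≤ f x) : ∃ y, f y = m := by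
  induction hm using Nat.decreasingInduction with
  | self => exact ⟨x, rfl⟩
  | of_succ k _ ih =>
    obtain ⟨y, hy⟩ := ih
    obtain ⟨w, -, hw⟩ := hf.exists_pred (y := y) fun hys => by grind [hf.source]
    exact ⟨w, by lia⟩

lemma range_subset_image [Fintype V] (hf : IsDistFrom R s f) (x : V) :
    Finset.range (f x + 1) ⊆ Finset.univ.image f := fun m hm => by
  obtain ⟨y, hy⟩ := hf.exists_eq_of_le (Nat.le_of_lt_succ (Finset.mem_range.1 hm))
  exact Finset.mem_image.2 ⟨y, Finset.mem_univ y, hy⟩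

lemma lt_card [Fintype V] (hf : IsDistFrom R s f) (x : V) : f x < Fintype.card V := by
  simpa using (Finset.card_le_card (hf.range_subset_image x)).trans Finset.card_image_le

lemma injective_of_card_le [Fintype V] (hf : IsDistFrom R s f) (hx : Fintype.card V ≤ f x + 1) :
    Function.Injective f := by
  have hcard := Finset.card_le_card (hf.range_subset_image x)
  rw [Finset.card_range] at hcard
  have himage : (Finset.univ.image f).card = (Finset.univ : Finset V).card :=
    le_antisymm Finset.card_image_le (hx.trans hcard)
  simpa only [Finset.coe_univ, Set.injOn_univ] using Finset.card_image_iff.1 himage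

end IsDistFrom

/-- `G` has an orientation of diameter at most `d`. -/
def HasOrientationDiamLE (G : SimpleGraph V) (d : ℕ) : Prop :=
  ∃ R, IsOrientation G R ∧ DiamLE R d

lemma HasOrientationDiamLE.of_iso {G : SimpleGraph V} {H : SimpleGraph W} {d : ℕ} (e : G ≃g H)
    (hH : HasOrientationDiamLE H d) : HasOrientationDiamLE G d := by
  obtain ⟨S, hS, hdiam⟩ := hH
  refine ⟨fun x y => S (e x) (e y), ⟨fun u v huv => e.map_adj_iff.1 (hS.1 _ _ huv),
    fun u v huv => hS.2 _ _ (e.map_adj_iff.2 huv)⟩, fun u v => ?_⟩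
  obtain ⟨k, hk, huv⟩ := hdiam (e u) (e v)
  exact ⟨k, hk, huv.comap e.toEquiv⟩

/-- `f` is the directed distance from `s` in `R` and all its layers are singletons, so that `f`
ranks the vertices linearly. -/
structure IsRanking (R : V → V → Prop) (s : V) (f : V → ℕ) : Prop extends IsDistFrom R s f where
  injective : Function.Injective f

lemma IsPartialOrientation.exists_isRanking [Fintype V] {G : SimpleGraph V}
    (hR : IsPartialOrientation G R) (hstrong : StronglyConnected R)
    (hG : ¬ HasOrientationDiamLE G (Fintype.card V - 2)) : ∃ s f, IsRanking R s f := by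
  obtain ⟨S, hS, hRS⟩ := hR.exists_isOrientation_le
  have hdiam : ¬ DiamLE S (Fintype.card V - 2) := fun h => hG ⟨S, hS, h⟩
  simp only [DiamLE, not_forall, not_exists, not_and] at hdiam
  obtain ⟨s, t, hst⟩ := hdiam
  obtain ⟨f, hf⟩ := hstrong.exists_isDistFrom s
  have hfar : Fintype.card V - 2 < f t :=
    not_le.1 fun hle => hst _ hle ((hf.relPow t).mono hRS)
  exact ⟨s, f, hf, hf.injective_of_card_le (x := t) (by lia)⟩

end Distance

section Ranking

variable {V : Type*} {R : V → V → Prop} {s a x y z : V} {f : V → ℕ} {P Q : Set V}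

/-- Every arc of `R` entering `P` from outside starts at `a`. -/
def IsGate (R : V → V → Prop) (a : V) (P : Set V) : Prop :=
  ∀ ⦃x y⦄, R x y → x ∉ P → y ∈ P → x = a

lemma IsDistFrom.lt_of_isGate (hf : IsDistFrom R s f) (hs : s ∉ P) (hP : IsGate R a P)
    (hz : z ∈ P) : f a < f z := by
  induction hk : f z generalizing z with
  | zero =>
    obtain ⟨x, -, hx⟩ := hf.exists_pred (ne_of_mem_of_not_mem hz hs)
    lia
  | succ k ih =>
    obtain ⟨x, hxz, hx⟩ := hf.exists_pred (ne_of_mem_of_not_mem hz hs)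
    by_cases hxP : x ∈ P
    · exact (ih hxP (by lia)).trans k.lt_succ_self
    · rw [← hP hxz hxP hz]
      lia

lemma IsRanking.le_or_le (hf : IsRanking R s f) (hxy : R x y) (hxz : R x z) (hyz : y ≠ z) :
    f y ≤ f x ∨ f z ≤ f x := by
  have hne := hf.injective.ne hyz
  have hy := hf.le_succ hxy
  have hz := hf.le_succ hxz
  lia

lemma IsRanking.arc_of_eq_add_one (hf : IsRanking R s f) (hxy : f y = f x + 1) : R x y := by
  obtain ⟨w, hwy, hw⟩ := hf.exists_pred (y := y) fun hys => by
    rw [hys, hf.source] at hxy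
    lia
  exact hf.injective (by lia : f w = f x) ▸ hwy

lemma IsRanking.source_mem_or_source_mem (hf : IsRanking R s f) (hay : R a y) (haz : R a z)
    (hyz : y ≠ z) (hy : y ∈ P) (hz : z ∈ Q) (hP : IsGate R a P) (hQ : IsGate R a Q) :
    s ∈ P ∨ s ∈ Q := by
  by_contra! hs
  have hay' := hf.lt_of_isGate hs.1 hP hy
  have haz' := hf.lt_of_isGate hs.2 hQ hz
  exact (hf.le_or_le hay haz hyz).elim hay'.not_ge haz'.not_ge

end Ranking

section Paths

variable {n : ℕ} {R : Fin n → Fin n → Prop} {a b h s x : Fin n} {f : Fin n → ℕ}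
  {D : Set (Fin n)} {k : ℕ}

/-- The digraph `R` contains the directed path `a → a + 1 → ⋯ → b`. -/
def Ascends (R : Fin n → Fin n → Prop) (a b : Fin n) : Prop :=
  ∀ ⦃i j : Fin n⦄, (i : ℕ) + 1 = j → a ≤ i → j ≤ b → R i j

lemma exists_succ_of_lt (hab : a < b) : ∃ a' : Fin n, (a : ℕ) + 1 = a' :=
  ⟨⟨a + 1, by lia⟩, rfl⟩

lemma exists_pred_of_lt (hab : a < b) : ∃ b' : Fin n, (b' : ℕ) + 1 = b :=
  ⟨⟨b - 1, by lia⟩, by simp only; lia⟩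

lemma Ascends.reflTransGen (hR : Ascends R a b) (hab : a ≤ b) : Relation.ReflTransGen R a b := by
  induction hk : (b : ℕ) - a generalizing b with
  | zero => exact (by lia : a = b) ▸ .refl
  | succ k ih =>
    obtain ⟨b', hb'⟩ := exists_pred_of_lt (a := a) (b := b) (by lia)
    exact (ih (fun i j hij hai hj => hR hij hai (by lia)) (by lia) (by lia)).tail
      (hR hb' (by lia) le_rfl)

-- The ranks after `k` are forced: the out-neighbours of the vertex of rank `k + i` along the path
-- contain the next path vertex, and the rank `k + i + 1` cannot be skipped or used twice.
lemma IsRanking.eq_add_of_ascends (hf : IsRanking R s f) (hD : ∀ y ∉ D, k ≤ f y)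
    (hR : Ascends R x h) (hxh : x ≤ h) (hpath : ∀ i, x ≤ i → i ≤ h → i ∉ D) (hx : f x ≤ k) :
    (∀ i, x ≤ i → i ≤ h → f i = k + (i - x)) ∧
      ∀ y ∉ D, y < x ∨ h < y → k + (h - x) < f y := by
  induction hm : (h : ℕ) - x generalizing h with
  | zero =>
    obtain rfl : x = h := by lia
    have hfx : f x = k := le_antisymm hx (hD x (hpath x le_rfl le_rfl))
    refine ⟨fun i hxi hix => by rw [le_antisymm hix hxi, hfx]; lia, fun y hy hyx => ?_⟩
    have hne : f y ≠ f x := hf.injective.ne (by lia)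
    have hky := hD y hy
    lia
  | succ m ih =>
    obtain ⟨g, hg⟩ := exists_pred_of_lt (b := h) (a := x) (by lia)
    obtain ⟨hinit, hout⟩ := ih (h := g) (fun i j hij hxi hj => hR hij hxi (by lia)) (by lia)
      (fun i hxi hig => hpath i hxi (by lia)) (by lia)
    have hfg := hinit g (by lia) le_rfl
    have hle := hf.le_succ (hR hg (by lia) le_rfl)
    have hlt := hout h (hpath h hxh le_rfl) (by lia)
    refine ⟨fun i hxi hih => ?_, fun y hy hyh => ?_⟩
    · rcases hih.lt_or_eq with hih | rfl
      · exact hinit i hxi (by lia)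
      · lia
    · have hne : f y ≠ f h := hf.injective.ne (by lia)
      have hky := hout y hy (by lia)
      lia

lemma stronglyConnected_of_exits (c : Fin n)
    (hup : ∀ i j : Fin n, (i : ℕ) + 1 = j → j ≤ c → R i j)
    (hdown : ∀ i j : Fin n, (i : ℕ) + 1 = j → c ≤ i → R j i)
    (hexit : ∀ l ≤ c, ∀ h ≥ c, 0 < (l : ℕ) ∨ (h : ℕ) + 1 < n →
      ∃ x y, R x y ∧ x ∈ Set.Icc l h ∧ y ∉ Set.Icc l h) : StronglyConnected R := by
  classical
  have hascend {x y : Fin n} (hxy : x ≤ y) (hy : y ≤ c) : Relation.ReflTransGen R x y :=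
    Ascends.reflTransGen (fun i j hij _ hj => hup i j hij (hj.trans hy)) hxy
  have hdescend {x y : Fin n} (hx : c ≤ x) (hxy : x ≤ y) : Relation.ReflTransGen R y x :=
    Relation.reflTransGen_swap.1
      (Ascends.reflTransGen (fun i j hij hi _ => hdown i j hij (hx.trans hi)) hxy)
  have hto (x : Fin n) : Relation.ReflTransGen R x c :=
    (le_total x c).elim (hascend · le_rfl) (hdescend le_rfl)
  suffices hfrom : ∀ x, Relation.ReflTransGen R c x from fun u v => (hto u).trans (hfrom v)
  let reached : Finset (Fin n) := Finset.univ.filter (Relation.ReflTransGen R c)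
  have hmem {x : Fin n} : x ∈ reached ↔ Relation.ReflTransGen R c x := by simp [reached]
  have hc : c ∈ reached := hmem.2 .refl
  obtain ⟨l, hl, hmin⟩ := reached.exists_min_image id ⟨c, hc⟩
  obtain ⟨h, hh, hmax⟩ := reached.exists_max_image id ⟨c, hc⟩
  have hIcc {x : Fin n} (hlx : l ≤ x) (hxh : x ≤ h) : x ∈ reached :=
    hmem.2 ((le_total x c).elim (fun hxc => (hmem.1 hl).trans (hascend hlx hxc))
      fun hcx => (hmem.1 hh).trans (hdescend hcx hxh))
  by_cases hproper : 0 < (l : ℕ) ∨ (h : ℕ) + 1 < n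
  · obtain ⟨x, y, hxy, hx, hy⟩ := hexit l (hmin c hc) h (hmax c hc) hproper
    have hyr : y ∈ reached := hmem.2 ((hmem.1 (hIcc hx.1 hx.2)).tail hxy)
    exact absurd ⟨hmin y hyr, hmax y hyr⟩ hy
  · exact fun x => hmem.1 (hIcc (by lia) (by lia))

/-- A chord of the path `0, 1, …, n - 1` in `H` is an edge between two non-consecutive vertices; its
smaller end is listed first. -/
def IsChord (H : SimpleGraph (Fin n)) (a b : Fin n) : Prop :=
  H.Adj a b ∧ (a : ℕ) + 2 ≤ b

lemma IsChord.lt {H : SimpleGraph (Fin n)} (hab : IsChord H a b) : a < b := by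
  have := hab.2
  lia

/-- The digraph formed by the path `0, 1, …, n - 1`, directed towards the peak `c` from both ends,
the arcs `x → y` for `F x y` and the arcs `y → x` for `B x y`. Both `F` and `B` are meant to consist
of chords, which list their smaller end first, so `F` and `B` hold the forward and the backward
arcs. -/
def peakArcs (c : Fin n) (F B : Fin n → Fin n → Prop) (x y : Fin n) : Prop :=
  (x : ℕ) + 1 = y ∧ y ≤ c ∨ (y : ℕ) + 1 = x ∧ c ≤ y ∨ F x y ∨ B y x

variable {H : SimpleGraph (Fin n)} {F B : Fin n → Fin n → Prop}

lemma isPartialOrientation_peakArcs (hpath : pathGraph n ≤ H) (c : Fin n)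
    (hF : ∀ x y, F x y → IsChord H x y) (hB : ∀ x y, B x y → IsChord H x y)
    (hFB : ∀ x y, F x y → ¬ B x y) : IsPartialOrientation H (peakArcs c F B) where
  adj {x y} hxy := by
    rcases hxy with ⟨hxy, -⟩ | ⟨hxy, -⟩ | hxy | hxy
    · exact hpath (pathGraph_adj.2 (Or.inl hxy))
    · exact hpath (pathGraph_adj.2 (Or.inr hxy))
    · exact (hF x y hxy).1
    · exact (hB y x hxy).1.symm
  asymm {x y} hxy hyx := by
    have hlen := fun h => (hF x y h).2
    have hlen' := fun h => (hF y x h).2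
    have hlenB := fun h => (hB x y h).2
    have hlenB' := fun h => (hB y x h).2
    have hdisj := hFB x y
    have hdisj' := hFB y x
    simp only [peakArcs] at hxy hyx
    lia

lemma exists_isRanking_peakArcs (hpath : pathGraph n ≤ H)
    (hH : ¬ HasOrientationDiamLE H (n - 2)) (c : Fin n)
    (hF : ∀ x y, F x y → IsChord H x y) (hB : ∀ x y, B x y → IsChord H x y)
    (hFB : ∀ x y, F x y → ¬ B x y)
    (hexit : ∀ l ≤ c, ∀ h ≥ c, 0 < (l : ℕ) ∨ (h : ℕ) + 1 < n →
      (∃ x y, B x y ∧ x < l ∧ l ≤ y ∧ y ≤ h) ∨ ∃ x y, F x y ∧ l ≤ x ∧ x ≤ h ∧ h < y) :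
    ∃ s f, IsRanking (peakArcs c F B) s f := by
  refine (isPartialOrientation_peakArcs hpath c hF hB hFB).exists_isRanking
    (stronglyConnected_of_exits c ?_ ?_ ?_) (by simpa using hH)
  · exact fun i j hij hj => Or.inl ⟨hij, hj⟩
  · exact fun i j hij hi => Or.inr (Or.inl ⟨hij, hi⟩)
  · intro l hl h hh hlh
    rcases hexit l hl h hh hlh with ⟨x, y, hxy, hxl, hly, hyh⟩ | ⟨x, y, hxy, hlx, hxh, hhy⟩
    · exact ⟨y, x, Or.inr (Or.inr (Or.inr hxy)), ⟨hly, hyh⟩, fun h => h.1.not_gt hxl⟩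
    · exact ⟨x, y, Or.inr (Or.inr (Or.inl hxy)), ⟨hlx, hxh⟩, fun h => h.2.not_gt hhy⟩

end Paths

section Chains

variable {n : ℕ} {H : SimpleGraph (Fin n)}

lemma exists_isRanking_of_chord_triple (hpath : pathGraph n ≤ H)
    (hH : ¬ HasOrientationDiamLE H (n - 2)) {a₁ b₁ a₂ b₂ a₃ b₃ : Fin n}
    (h₁ : IsChord H a₁ b₁) (h₂ : IsChord H a₂ b₂) (h₃ : IsChord H a₃ b₃)
    (ha : a₁ < a₂) (hab₁ : a₂ ≤ b₁) (hba : b₁ < a₃) (hab₂ : a₃ ≤ b₂) (hb : b₂ < b₃)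
    (hleft : ∀ l ≤ a₁, 0 < (l : ℕ) → ∃ x y, IsChord H x y ∧ x < l ∧ l ≤ y ∧ y < a₂)
    (hright : ∀ h ≥ b₃, (h : ℕ) + 1 < n → ∃ x y, IsChord H x y ∧ b₂ < x ∧ x ≤ h ∧ h < y) :
    ∃ s f, IsRanking (peakArcs b₂ (fun x y => x = a₃ ∧ y = b₃ ∨ IsChord H x y ∧ b₂ < x)
      (fun x y => x = a₁ ∧ y = b₁ ∨ x = a₂ ∧ y = b₂ ∨ IsChord H x y ∧ y < a₂)) s f := by
  apply exists_isRanking_peakArcs hpath hH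
  · rintro x y (⟨rfl, rfl⟩ | h)
    exacts [h₃, h.1]
  · rintro x y (⟨rfl, rfl⟩ | ⟨rfl, rfl⟩ | h)
    exacts [h₁, h₂, h.1]
  · have := h₂.lt
    rintro x y (⟨rfl, rfl⟩ | ⟨hxy, hx⟩) hB
    · lia
    · have := hxy.lt
      lia
  intro l hl h hh hlh
  by_cases h₂l : a₂ < l
  · exact Or.inl ⟨a₂, b₂, by simp, h₂l, hl, hh⟩
  by_cases h₁l : a₁ < l
  · exact Or.inl ⟨a₁, b₁, by simp, h₁l, by lia, by lia⟩
  by_cases h0l : 0 < (l : ℕ)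
  · obtain ⟨x, y, hxy, hxl, hly, hya⟩ := hleft l (not_lt.1 h₁l) h0l
    exact Or.inl ⟨x, y, by simp [hxy, hya], hxl, hly, by lia⟩
  by_cases h₃h : h < b₃
  · exact Or.inr ⟨a₃, b₃, by simp, by lia, by lia, h₃h⟩
  obtain ⟨x, y, hxy, hbx, hxh, hhy⟩ := hright h (not_lt.1 h₃h) (by lia)
  exact Or.inr ⟨x, y, by simp [hxy, hbx], by lia, hxh, hhy⟩

-- The source must lie close to both branch vertices `b₁` and `a₃`, which `b₁ < a₃ < b₂` separates.
lemma right_le_left_of_chord_triple (hpath : pathGraph n ≤ H)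
    (hH : ¬ HasOrientationDiamLE H (n - 2)) {a₁ b₁ a₂ b₂ a₃ b₃ : Fin n}
    (h₁ : IsChord H a₁ b₁) (h₂ : IsChord H a₂ b₂) (h₃ : IsChord H a₃ b₃)
    (ha : a₁ < a₂) (hab₁ : a₂ ≤ b₁) (hba : b₁ < a₃) (hb : b₂ < b₃)
    (hleft : ∀ l ≤ a₁, 0 < (l : ℕ) → ∃ x y, IsChord H x y ∧ x < l ∧ l ≤ y ∧ y < a₂)
    (hright : ∀ h ≥ b₃, (h : ℕ) + 1 < n → ∃ x y, IsChord H x y ∧ b₂ < x ∧ x ≤ h ∧ h < y) :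
    b₂ ≤ a₃ := by
  by_contra! hab₂
  obtain ⟨s, f, hf⟩ :=
    exists_isRanking_of_chord_triple hpath hH h₁ h₂ h₃ ha hab₁ hba hab₂.le hb hleft hright
  obtain ⟨b₁', hb₁'⟩ := exists_succ_of_lt hba
  obtain ⟨a₃', ha₃'⟩ := exists_succ_of_lt hab₂
  have hs₁ : s ∈ Set.Iio a₂ ∨ s ∈ Set.Ioc b₁ a₃ := by
    refine hf.source_mem_or_source_mem (a := b₁) (y := a₁) (z := b₁') (by simp [peakArcs])
      (Or.inl ⟨hb₁', by lia⟩) (by lia) ha ⟨by lia, by lia⟩ ?_ ?_ <;>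
    · intro x y hxy
      simp only [peakArcs, IsChord, Set.mem_Iio, Set.mem_Ioc] at hxy h₁ h₂ h₃ ⊢
      lia
  have hs₃ : s ∈ Set.Ioi a₃ := or_self_iff.1 <| by
    refine hf.source_mem_or_source_mem (a := a₃) (y := b₃) (z := a₃') (by simp [peakArcs])
      (Or.inl ⟨ha₃', by lia⟩) (by lia) h₃.lt (Set.mem_Ioi.2 (by lia)) ?_ ?_ <;>
    · intro x y hxy
      simp only [peakArcs, IsChord, Set.mem_Ioi] at hxy h₁ h₂ h₃ ⊢
      lia
  simp only [Set.mem_Iio, Set.mem_Ioc, Set.mem_Ioi] at hs₁ hs₃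
  lia

lemma isChord_comap_rev {a b : Fin n} :
    IsChord (H.comap Fin.rev) a b ↔ IsChord H b.rev a.rev := by
  simp only [IsChord, comap_adj, H.adj_comm a.rev, Fin.val_rev]
  lia

lemma pathGraph_le_comap_rev (hpath : pathGraph n ≤ H) : pathGraph n ≤ H.comap Fin.rev :=
  fun x y hxy => hpath <| pathGraph_adj.2 <| by
    rw [pathGraph_adj] at hxy
    simp only [Fin.val_rev]
    lia

lemma HasOrientationDiamLE.of_comap_rev {d : ℕ} (hH : HasOrientationDiamLE (H.comap Fin.rev) d) :
    HasOrientationDiamLE H d :=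
  hH.of_iso (Iso.comap Fin.revPerm H).symm

lemma right_le_left_of_chord_triple_rev (hpath : pathGraph n ≤ H)
    (hH : ¬ HasOrientationDiamLE H (n - 2)) {a₁ b₁ a₂ b₂ a₃ b₃ : Fin n}
    (h₁ : IsChord H a₁ b₁) (h₂ : IsChord H a₂ b₂) (h₃ : IsChord H a₃ b₃)
    (ha : a₁ < a₂) (hba : b₁ < a₃) (hab₂ : a₃ ≤ b₂) (hb : b₂ < b₃)
    (hleft : ∀ l ≤ a₁, 0 < (l : ℕ) → ∃ x y, IsChord H x y ∧ x < l ∧ l ≤ y ∧ y < a₂)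
    (hright : ∀ h ≥ b₃, (h : ℕ) + 1 < n → ∃ x y, IsChord H x y ∧ b₂ < x ∧ x ≤ h ∧ h < y) :
    b₁ ≤ a₂ := by
  have hchord {x y : Fin n} (hxy : IsChord H x y) : IsChord (H.comap Fin.rev) y.rev x.rev := by
    simpa [isChord_comap_rev] using hxy
  refine Fin.rev_le_rev.1 (right_le_left_of_chord_triple (pathGraph_le_comap_rev hpath)
    (mt HasOrientationDiamLE.of_comap_rev hH) (hchord h₃) (hchord h₂) (hchord h₁)
    (Fin.rev_lt_rev.2 hb) (Fin.rev_le_rev.2 hab₂) (Fin.rev_lt_rev.2 hba) (Fin.rev_lt_rev.2 ha)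
    (fun l hl h0 => ?_) fun h hh hn => ?_)
  · obtain ⟨x, y, hxy, hbx, hxl, hly⟩ :=
      hright l.rev (Fin.le_rev_iff.1 hl) (by simp only [Fin.val_rev]; lia)
    exact ⟨y.rev, x.rev, hchord hxy, Fin.rev_lt_iff.2 hly, Fin.le_rev_iff.2 hxl,
      Fin.rev_lt_rev.2 hbx⟩
  · obtain ⟨x, y, hxy, hxh, hhy, hya⟩ :=
      hleft h.rev (Fin.rev_le_iff.1 hh) (by simp only [Fin.val_rev]; lia)
    exact ⟨y.rev, x.rev, hchord hxy, Fin.rev_lt_rev.2 hya, Fin.rev_le_iff.2 hhy,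
      Fin.lt_rev_iff.2 hxh⟩

end Chains

section ThinChains

variable {n : ℕ} {H : SimpleGraph (Fin n)}

lemma exists_isRanking_of_chord_path (hpath : pathGraph n ≤ H)
    (hH : ¬ HasOrientationDiamLE H (n - 2)) {o w₁ w₂ w₃ : Fin n} (ho : (o : ℕ) = 0)
    (h₁ : IsChord H o w₁) (h₂ : IsChord H w₁ w₂) (h₃ : IsChord H w₂ w₃)
    (hright : ∀ h ≥ w₃, (h : ℕ) + 1 < n → ∃ x y, IsChord H x y ∧ w₃ ≤ x ∧ x ≤ h ∧ h < y) :
    ∃ s f, IsRanking (peakArcs w₂ (fun x y => x = w₂ ∧ y = w₃ ∨ IsChord H x y ∧ w₃ ≤ x)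
      (fun x y => x = o ∧ y = w₁ ∨ x = w₁ ∧ y = w₂)) s f := by
  have h₁₂ := h₂.lt
  have h₂₃ := h₃.lt
  apply exists_isRanking_peakArcs hpath hH
  · rintro x y (⟨rfl, rfl⟩ | h)
    exacts [h₃, h.1]
  · rintro x y (⟨rfl, rfl⟩ | ⟨rfl, rfl⟩)
    exacts [h₁, h₂]
  · have := h₁.lt
    lia
  intro l hl h hh hlh
  by_cases h₁l : w₁ < l
  · exact Or.inl ⟨w₁, w₂, by simp, h₁l, hl, hh⟩
  by_cases h0l : o < l
  · exact Or.inl ⟨o, w₁, by simp, h0l, by lia, by lia⟩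
  by_cases h₃h : h < w₃
  · exact Or.inr ⟨w₂, w₃, by simp, hl, hh, h₃h⟩
  obtain ⟨x, y, hxy, hwx, hxh, hhy⟩ := hright h (not_lt.1 h₃h) (by lia)
  exact Or.inr ⟨x, y, by simp [hxy, hwx], by lia, hxh, hhy⟩

-- The branch vertices `w₁` and `w₃` force the source to both sides of `w₂`.
lemma add_one_eq_of_chord_path (hpath : pathGraph n ≤ H)
    (hH : ¬ HasOrientationDiamLE H (n - 2)) {o w₁ w₂ w₃ : Fin n} (ho : (o : ℕ) = 0)
    (h₁ : IsChord H o w₁) (h₂ : IsChord H w₁ w₂) (h₃ : IsChord H w₂ w₃)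
    (hright : ∀ h ≥ w₃, (h : ℕ) + 1 < n → ∃ x y, IsChord H x y ∧ w₃ ≤ x ∧ x ≤ h ∧ h < y) :
    (w₃ : ℕ) + 1 = n := by
  by_contra hlast
  have h₁₂ := h₂.lt
  have h₂₃ := h₃.lt
  obtain ⟨s, f, hf⟩ := exists_isRanking_of_chord_path hpath hH ho h₁ h₂ h₃ hright
  obtain ⟨w₁', hw₁'⟩ := exists_succ_of_lt h₁₂
  obtain ⟨v, hv⟩ := exists_pred_of_lt h₂₃
  obtain ⟨x, y, hxy, hwx, hxw, hwy⟩ := hright w₃ le_rfl (by lia)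
  obtain rfl : x = w₃ := le_antisymm hxw hwx
  have hs₁ : s ∈ Set.Iio w₁ ∨ s ∈ Set.Ioo w₁ w₂ := by
    refine hf.source_mem_or_source_mem (a := w₁) (y := o) (z := w₁') (by simp [peakArcs])
      (Or.inl ⟨hw₁', by lia⟩) (by lia) h₁.lt ⟨by lia, ?_⟩ ?_ ?_
    · have := h₂.2
      lia
    all_goals
      intro x y hxy
      simp only [peakArcs, IsChord, Set.mem_Iio, Set.mem_Ioo] at hxy h₁ h₂ h₃ ⊢
      lia
  have hs₃ : s ∈ Set.Ioo w₂ x ∨ s ∈ Set.Ioi x := by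
    refine hf.source_mem_or_source_mem (a := x) (y := v) (z := y) (Or.inr (Or.inl ⟨hv, by lia⟩))
      (by simp [peakArcs, hxy]) (by lia) ⟨?_, by lia⟩ hwy ?_ ?_
    · have := h₃.2
      lia
    all_goals
      intro x y hxy
      simp only [peakArcs, IsChord, Set.mem_Ioi, Set.mem_Ioo] at hxy h₁ h₂ h₃ ⊢
      lia
  simp only [Set.mem_Iio, Set.mem_Ioo, Set.mem_Ioi] at hs₁ hs₃
  lia

end ThinChains

section AscendingPath

variable {n : ℕ} {R : Fin n → Fin n → Prop} {f : Fin n → ℕ} {D : Set (Fin n)} {k : ℕ}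
  {a b h o s u v x y z : Fin n}

lemma IsRanking.mem_or_mem_of_ascends (hf : IsRanking R s f) (hD : ∀ y ∉ D, k ≤ f y)
    (hR : Ascends R x h) (hxh : x ≤ h) (hpath : ∀ i, x ≤ i → i ≤ h → i ∉ D) (hx : f x ≤ k)
    (hhy : R h y) (hhz : R h z) (hyz : y ≠ z) : y ∈ D ∪ Set.Icc x h ∨ z ∈ D ∪ Set.Icc x h := by
  by_contra! hyz'
  simp only [Set.mem_union, Set.mem_Icc, not_or, not_and, not_le] at hyz'
  obtain ⟨⟨hyD, hy⟩, hzD, hz⟩ := hyz'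
  obtain ⟨hrank, hlater⟩ := hf.eq_add_of_ascends hD hR hxh hpath hx
  have hh := hrank h hxh le_rfl
  have hlt_y := hlater y hyD ((lt_or_ge y x).imp_right hy)
  have hlt_z := hlater z hzD ((lt_or_ge z x).imp_right hz)
  have hle := hf.le_or_le hhy hhz hyz
  lia

lemma IsRanking.val_source_ne_zero (hf : IsRanking R s f)
    (hstep : ∀ ⦃i j : Fin n⦄, (i : ℕ) + 1 = j → R i j) (huv : R u v) (hlen : (u : ℕ) + 2 ≤ v) :
    (s : ℕ) ≠ 0 := fun hs => by
  obtain ⟨hrank, -⟩ := hf.eq_add_of_ascends (x := s) (h := v) (D := ∅) (k := 0) (by simp)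
    (fun i j hij _ _ => hstep hij) (by lia) (by simp) hf.source.le
  have hu := hrank u (by lia) (by lia)
  have hv := hrank v (by lia) le_rfl
  have hle := hf.le_succ huv
  lia

lemma IsRanking.lt_source (hf : IsRanking R s f)
    (hstep : ∀ ⦃i j : Fin n⦄, (i : ℕ) + 1 = j → R i j) (hhy : R h y) (hys : y < s) (hhz : h < z) :
    h < s := by
  by_contra! hsh
  obtain ⟨h', hh'⟩ := exists_succ_of_lt hhz
  have hmem := hf.mem_or_mem_of_ascends (x := s) (D := ∅) (k := 0) (by simp)
    (fun i j hij _ _ => hstep hij) hsh (by simp) hf.source.le hhy (hstep hh') (by lia)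
  simp only [Set.empty_union, Set.mem_Icc] at hmem
  lia

lemma IsRanking.eq_sub_source (hf : IsRanking R s f)
    (hstep : ∀ ⦃i j : Fin n⦄, (i : ℕ) + 1 = j → R i j) (hz : (z : ℕ) + 1 = n) :
    (∀ i ≥ s, f i = i - s) ∧ ∀ y < s, n - s ≤ f y := by
  obtain ⟨hrank, hlater⟩ := hf.eq_add_of_ascends (x := s) (h := z) (D := ∅) (k := 0) (by simp)
    (fun i j hij _ _ => hstep hij) (by lia) (by simp) hf.source.le
  refine ⟨fun i hi => by simpa using hrank i hi (by lia), fun y hy => ?_⟩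
  have := hlater y (Set.notMem_empty y) (Or.inl hy)
  lia

lemma IsRanking.le_of_last_arc (hf : IsRanking R s f)
    (hstep : ∀ ⦃i j : Fin n⦄, (i : ℕ) + 1 = j → R i j) (hz : (z : ℕ) + 1 = n) (hzx : R z x) :
    f x ≤ n - s := by
  have hfz := (hf.eq_sub_source hstep hz).1 z (by lia)
  have hle := hf.le_succ hzx
  lia

lemma IsRanking.add_one_eq_source (hf : IsRanking R s f)
    (hstep : ∀ ⦃i j : Fin n⦄, (i : ℕ) + 1 = j → R i j) (hz : (z : ℕ) + 1 = n) (hzx : R z x)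
    (hxh : x ≤ h) (hhy : R h y) (hyx : y < x) (hhs : h < s) : (h : ℕ) + 1 = s := by
  obtain ⟨h', hh'⟩ := exists_succ_of_lt hhs
  have hmem := hf.mem_or_mem_of_ascends (D := Set.Ici s) (k := n - s) (fun y hy =>
      (hf.eq_sub_source hstep hz).2 y (by simpa using hy))
    (fun i j hij _ _ => hstep hij) hxh (fun i _ hi => by simp only [Set.mem_Ici]; lia)
    (hf.le_of_last_arc hstep hz hzx) hhy (hstep hh') (by lia)
  simp only [Set.mem_union, Set.mem_Icc, Set.mem_Ici] at hmem
  lia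

lemma IsRanking.eq_of_two_back_arcs (hf : IsRanking R s f)
    (hstep : ∀ ⦃i j : Fin n⦄, (i : ℕ) + 1 = j → R i j) (ho : (o : ℕ) = 0) (hz : (z : ℕ) + 1 = n)
    (hbo : R b o) (hza : R z a) (hoa : o < a) (hab : a ≤ b) (hs : (b : ℕ) + 1 = s) :
    (∀ i, a ≤ i → i ≤ b → f i = n - s + (i - a)) ∧ ∀ i < a, f i = n - a + i := by
  obtain ⟨hmid, hlate⟩ := hf.eq_add_of_ascends (D := Set.Ici s) (k := n - s) (fun y hy =>
      (hf.eq_sub_source hstep hz).2 y (by simpa using hy))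
    (fun i j hij _ _ => hstep hij) hab (fun i _ hi => by simp only [Set.mem_Ici]; lia)
    (hf.le_of_last_arc hstep hz hza)
  obtain ⟨a', ha'⟩ := exists_pred_of_lt hoa
  have hfb := hmid b hab le_rfl
  have hfo := hf.le_succ hbo
  obtain ⟨hinit, -⟩ := hf.eq_add_of_ascends (x := o) (h := a') (D := Set.Ici a) (k := n - a)
    (fun y hy => by
      have := hlate y (by simp only [Set.mem_Ici] at hy ⊢; lia) (Or.inl (by simpa using hy))
      lia)
    (fun i j hij _ _ => hstep hij) (by lia) (fun i _ hi => by simp only [Set.mem_Ici]; lia)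
    (by lia)
  exact ⟨hmid, fun i hi => by have := hinit i (by lia) (by lia); lia⟩

lemma IsRanking.false_of_three_back_arcs (hf : IsRanking R s f)
    (hstep : ∀ ⦃i j : Fin n⦄, (i : ℕ) + 1 = j → R i j) (hz : (z : ℕ) + 1 = n) (hao : R a o)
    (hba : R b a) (hzb : R z b) (hos : o < s) (hoa : o < a) (hab : (a : ℕ) + 2 ≤ b)
    (hbz : b < z) : False := by
  have hab' : a < b := by lia
  have has := hf.lt_source hstep hao hos (hab'.trans hbz)
  have hbs := hf.lt_source hstep hba has hbz
  have hs := hf.add_one_eq_source hstep hz hzb le_rfl hba hab' hbs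
  have hearly : ∀ y < s, n - s ≤ f y := (hf.eq_sub_source hstep hz).2
  have hfb : f b = n - s := le_antisymm (hf.le_of_last_arc hstep hz hzb) (hearly b hbs)
  have hfa : f a ≤ n - s + 1 := hfb ▸ hf.le_succ hba
  have hlate : ∀ y ∉ Set.Ici b, n - s + 1 ≤ f y := fun y hy => by
    rw [Set.mem_Ici, not_le] at hy
    have hne := hf.injective.ne hy.ne
    have hle := hearly y (hy.trans hbs)
    lia
  obtain ⟨a', ha'⟩ := exists_succ_of_lt hab'
  have hmem := hf.mem_or_mem_of_ascends hlate (fun i j hij _ _ => hstep hij) le_rfl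
    (fun i _ hi => by simp only [Set.mem_Ici]; lia) hfa hao (hstep ha') (by lia)
  simp only [Set.mem_union, Set.mem_Icc, Set.mem_Ici] at hmem
  lia

end AscendingPath

section ShortChains

variable {n : ℕ} {H : SimpleGraph (Fin n)} {a b o p q u v z : Fin n}

lemma exists_isRanking_of_back_arcs (hpath : pathGraph n ≤ H)
    (hH : ¬ HasOrientationDiamLE H (n - 2)) {B : Fin n → Fin n → Prop}
    (hB : ∀ x y, B x y → IsChord H x y) (hz : (z : ℕ) + 1 = n)
    (hcover : ∀ l : Fin n, 0 < (l : ℕ) → ∃ x y, B x y ∧ x < l ∧ l ≤ y)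
    (huv : IsChord H u v) (huvB : ¬ B u v) :
    ∃ (R : Fin n → Fin n → Prop) (s : Fin n) (f : Fin n → ℕ), IsRanking R s f ∧
      (∀ ⦃i j : Fin n⦄, (i : ℕ) + 1 = j → R i j) ∧ R u v ∧ ∀ ⦃x y⦄, B x y → R y x := by
  obtain ⟨s, f, hf⟩ := exists_isRanking_peakArcs hpath hH z
    (F := fun x y => x = u ∧ y = v) (B := B) (by rintro x y ⟨rfl, rfl⟩; exact huv) hB
    (by rintro x y ⟨rfl, rfl⟩; exact huvB) (fun l _ h hh hlh => by
      obtain ⟨x, y, hxy, hxl, hly⟩ := hcover l (by lia)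
      exact Or.inl ⟨x, y, hxy, hxl, hly, by lia⟩)
  exact ⟨_, s, f, hf, fun i j hij => Or.inl ⟨hij, by lia⟩, by simp [peakArcs],
    fun x y hxy => Or.inr (Or.inr (Or.inr hxy))⟩

/-- The vertices `x` and `y` lie in the same of the three segments `[0, a)`, `[a, b]` and
`(b, n - 1]` of the path. -/
def SameSegment (a b x y : Fin n) : Prop :=
  (x < a ↔ y < a) ∧ (x ≤ b ↔ y ≤ b)

-- The source is `b + 1` and the three segments are traversed from right to left, so `q → p` stays
-- inside a segment whereas `u → v` does not.
lemma sameSegment_of_two_chords (hpath : pathGraph n ≤ H)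
    (hH : ¬ HasOrientationDiamLE H (n - 2)) (ho : (o : ℕ) = 0) (hz : (z : ℕ) + 1 = n)
    (hob : IsChord H o b) (haz : IsChord H a z) (hoa : o < a) (hab : a ≤ b) (hbz : b < z)
    (huv : IsChord H u v) (hpq : IsChord H p q) (huv_ob : (u, v) ≠ (o, b))
    (huv_az : (u, v) ≠ (a, z)) (huv_pq : (u, v) ≠ (p, q)) (hpq_ob : (p, q) ≠ (o, b))
    (hpq_az : (p, q) ≠ (a, z)) : SameSegment a b p q ∧ ¬ SameSegment a b u v := by
  simp only [ne_eq, Prod.mk.injEq] at *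
  obtain ⟨R, s, f, hf, hstep, hRuv, hback⟩ := exists_isRanking_of_back_arcs hpath hH
    (B := fun x y => x = o ∧ y = b ∨ x = a ∧ y = z ∨ x = p ∧ y = q)
    (by rintro x y (⟨rfl, rfl⟩ | ⟨rfl, rfl⟩ | ⟨rfl, rfl⟩) <;> assumption) hz
    (fun l hl => if hal : a < l then ⟨a, z, by simp, hal, by lia⟩
      else ⟨o, b, by simp, by lia, by lia⟩) huv (by lia)
  have hbo : R b o := hback (by simp)
  have hza : R z a := hback (by simp)
  have hs0 := hf.val_source_ne_zero hstep hRuv huv.2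
  have hbs := hf.lt_source hstep hbo (by lia) hbz
  have hs := hf.add_one_eq_source hstep hz hza hab hbo hoa hbs
  obtain ⟨hmid, hinit⟩ := hf.eq_of_two_back_arcs hstep ho hz hbo hza hoa hab hs
  have hlast := (hf.eq_sub_source hstep hz).1
  have hle_uv : f v ≤ f u + 1 := hf.le_succ hRuv
  have hle_pq : f p ≤ f q + 1 := hf.le_succ (hback (by simp))
  have hrank (i : Fin n) : f i = if i < a then n - a + i else
      if i ≤ b then n - s + (i - a) else i - s := by
    split_ifs with hia hib
    exacts [hinit i hia, hmid i (by lia) hib, hlast i (by lia)]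
  have hlen_uv := huv.2
  have hlen_pq := hpq.2
  simp only [hrank] at hle_uv hle_pq
  simp only [SameSegment]
  constructor <;> lia

lemma false_of_two_chords (hpath : pathGraph n ≤ H)
    (hH : ¬ HasOrientationDiamLE H (n - 2)) (ho : (o : ℕ) = 0) (hz : (z : ℕ) + 1 = n)
    (hob : IsChord H o b) (haz : IsChord H a z) (hoa : o < a) (hab : a ≤ b) (hbz : b < z)
    (huv : IsChord H u v) (hpq : IsChord H p q) (huv_ob : (u, v) ≠ (o, b))
    (huv_az : (u, v) ≠ (a, z)) (huv_pq : (u, v) ≠ (p, q)) (hpq_ob : (p, q) ≠ (o, b))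
    (hpq_az : (p, q) ≠ (a, z)) : False :=
  (sameSegment_of_two_chords hpath hH ho hz hob haz hoa hab hbz hpq huv hpq_ob hpq_az
    huv_pq.symm huv_ob huv_az).2 (sameSegment_of_two_chords hpath hH ho hz hob haz hoa hab hbz
    huv hpq huv_ob huv_az huv_pq hpq_ob hpq_az).1

lemma false_of_three_chords (hpath : pathGraph n ≤ H)
    (hH : ¬ HasOrientationDiamLE H (n - 2)) (ho : (o : ℕ) = 0) (hz : (z : ℕ) + 1 = n)
    (hoa : IsChord H o a) (hab : IsChord H a b) (hbz : IsChord H b z) (huv : IsChord H u v)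
    (huv_oa : (u, v) ≠ (o, a)) (huv_ab : (u, v) ≠ (a, b)) (huv_bz : (u, v) ≠ (b, z)) : False := by
  have hoa' := hoa.lt
  have hbz' := hbz.lt
  simp only [ne_eq, Prod.mk.injEq] at *
  obtain ⟨R, s, f, hf, hstep, hRuv, hback⟩ := exists_isRanking_of_back_arcs hpath hH
    (B := fun x y => x = o ∧ y = a ∨ x = a ∧ y = b ∨ x = b ∧ y = z)
    (by rintro x y (⟨rfl, rfl⟩ | ⟨rfl, rfl⟩ | ⟨rfl, rfl⟩) <;> assumption) hz
    (fun l hl => if hbl : b < l then ⟨b, z, by simp, hbl, by lia⟩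
      else if hal : a < l then ⟨a, b, by simp, hal, by lia⟩
      else ⟨o, a, by simp, by lia, by lia⟩) huv (by lia)
  have hs0 := hf.val_source_ne_zero hstep hRuv huv.2
  exact hf.false_of_three_back_arcs hstep hz (hback (by simp)) (hback (by simp))
    (hback (by simp)) (by lia) hoa' hab.2 hbz'

end ShortChains

section Greedy

variable {n : ℕ} {H : SimpleGraph (Fin n)} {a b h i o z : Fin n}

/-- Every cut `{0, …, i} | {i + 1, …, n - 1}` of the path is crossed by a chord. -/
def ChordsCover (H : SimpleGraph (Fin n)) : Prop :=
  ∀ i : Fin n, (i : ℕ) + 1 < n → ∃ a b, IsChord H a b ∧ a ≤ i ∧ i < b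

/-- Among the chords starting in `{0, …, i}`, the chord `a b` reaches farthest to the right, namely
beyond `i`. -/
structure IsFarthestChord (H : SimpleGraph (Fin n)) (i a b : Fin n) : Prop where
  isChord : IsChord H a b
  left_le : a ≤ i
  lt_right : i < b
  le_right {x y : Fin n} : IsChord H x y → x ≤ i → y ≤ b

lemma ChordsCover.exists_isFarthestChord (hH : ChordsCover H) (hi : (i : ℕ) + 1 < n) :
    ∃ a b, IsFarthestChord H i a b := by
  classical
  obtain ⟨a₀, b₀, hab₀, ha₀, hb₀⟩ := hH i hi
  obtain ⟨b, hb, hmax⟩ := (Finset.univ.filter fun b => ∃ a, IsChord H a b ∧ a ≤ i).exists_max_image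
    id ⟨b₀, by simpa using ⟨a₀, hab₀, ha₀⟩⟩
  simp only [Finset.mem_filter, Finset.mem_univ, true_and, id] at hb hmax
  obtain ⟨a, hab, ha⟩ := hb
  exact ⟨a, b, hab, ha, hb₀.trans_le (hmax b₀ ⟨a₀, hab₀, ha₀⟩), fun hxy hx => hmax _ ⟨_, hxy, hx⟩⟩

lemma IsFarthestChord.exists_isChord_beyond (hab : IsFarthestChord H i a b) (hH : ChordsCover H)
    (hbh : b ≤ h) (hh : (h : ℕ) + 1 < n) : ∃ x y, IsChord H x y ∧ i < x ∧ x ≤ h ∧ h < y := by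
  obtain ⟨x, y, hxy, hxh, hhy⟩ := hH h hh
  exact ⟨x, y, hxy, not_le.1 fun hxi => hhy.not_ge ((hab.le_right hxy hxi).trans hbh), hxh, hhy⟩

lemma IsFarthestChord.exists_next (hab : IsFarthestChord H i a b) (hH : ChordsCover H)
    (hb : (b : ℕ) + 1 < n) : ∃ x y, IsFarthestChord H b x y ∧ i < x := by
  obtain ⟨x, y, hxy⟩ := hH.exists_isFarthestChord hb
  exact ⟨x, y, hxy, not_le.1 fun hxi => hxy.lt_right.not_ge (hab.le_right hxy.isChord hxi)⟩

lemma exists_isChord_notMem (hcard : 4 ≤ {c : Fin n × Fin n | IsChord H c.1 c.2}.ncard)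
    (D : Finset (Fin n × Fin n)) (hD : D.card ≤ 3) : ∃ u v, IsChord H u v ∧ (u, v) ∉ D := by
  have hlt : (D : Set (Fin n × Fin n)).ncard < {c : Fin n × Fin n | IsChord H c.1 c.2}.ncard := by
    rw [Set.ncard_coe_finset]
    lia
  obtain ⟨⟨u, v⟩, huv, huvD⟩ := Set.exists_mem_notMem_of_ncard_lt_ncard hlt
  exact ⟨u, v, huv, by simpa using huvD⟩

lemma false_of_chain_two (hpath : pathGraph n ≤ H) (hH : ¬ HasOrientationDiamLE H (n - 2))
    (hcard : 4 ≤ {c : Fin n × Fin n | IsChord H c.1 c.2}.ncard) (ho : (o : ℕ) = 0)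
    (hz : (z : ℕ) + 1 = n) (hob : IsChord H o b) (haz : IsChord H a z) (hoa : o < a) (hab : a ≤ b)
    (hbz : b < z) : False := by
  obtain ⟨u, v, huv, huvD⟩ := exists_isChord_notMem hcard {(o, b), (a, z)}
    (Finset.card_le_two.trans (by lia))
  obtain ⟨p, q, hpq, hpqD⟩ := exists_isChord_notMem hcard {(o, b), (a, z), (u, v)}
    Finset.card_le_three
  simp only [Finset.mem_insert, Finset.mem_singleton, not_or] at huvD hpqD
  exact false_of_two_chords hpath hH ho hz hob haz hoa hab hbz huv hpq huvD.1 huvD.2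
    (Ne.symm hpqD.2.2) hpqD.1 hpqD.2.1

lemma false_of_chain_four (hpath : pathGraph n ≤ H) (hH : ¬ HasOrientationDiamLE H (n - 2))
    (hcover : ChordsCover H) {w₁ w₂ w₃ : Fin n} (ho : (o : ℕ) = 0) (h₁ : IsChord H o w₁)
    (h₂ : IsChord H w₁ w₂) (h₃ : IsFarthestChord H w₂ w₂ w₃) (hlast : (w₃ : ℕ) + 1 < n) :
    False := by
  obtain ⟨a, b, hab, hwa⟩ := h₃.exists_next hcover hlast
  have hbeyond := fun h hh hn => hab.exists_isChord_beyond hcover (h := h) hh hn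
  have hwa' : w₃ ≤ a := right_le_left_of_chord_triple hpath hH h₂ h₃.isChord hab.isChord h₂.lt
    le_rfl hwa hab.lt_right
    (fun l hl h0 => ⟨o, w₁, h₁, by lia, hl, h₂.lt⟩) hbeyond
  have hlast' := add_one_eq_of_chord_path hpath hH ho h₁ h₂ h₃.isChord fun h hh hn => by
    by_cases hhb : h < b
    · exact ⟨a, b, hab.isChord, hwa', hab.left_le.trans hh, hhb⟩
    · obtain ⟨x, y, hxy, hwx, hx, hy⟩ := hbeyond h (not_lt.1 hhb) hn
      exact ⟨x, y, hxy, hwx.le, hx, hy⟩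
  exact hlast.ne hlast'

theorem hasOrientationDiamLE_of_chordsCover (hpath : pathGraph n ≤ H) (hcover : ChordsCover H)
    (hcyc : ∀ o z : Fin n, (o : ℕ) = 0 → (z : ℕ) + 1 = n → ¬ H.Adj o z)
    (hcard : 4 ≤ {c : Fin n × Fin n | IsChord H c.1 c.2}.ncard) :
    HasOrientationDiamLE H (n - 2) := by
  by_contra hH
  obtain ⟨u, v, huv, -⟩ := exists_isChord_notMem hcard ∅ (by simp)
  have hlen := huv.2
  obtain ⟨o, ho⟩ : ∃ o : Fin n, (o : ℕ) = 0 := ⟨⟨0, by lia⟩, rfl⟩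
  obtain ⟨a₁, b₁, h₁⟩ := hcover.exists_isFarthestChord (i := o) (by lia)
  obtain rfl : a₁ = o := le_antisymm h₁.left_le (by lia)
  have hb₁ : (b₁ : ℕ) + 1 ≠ n := fun hb => hcyc a₁ b₁ ho hb h₁.isChord.1
  obtain ⟨a₂, b₂, h₂, ha₂⟩ := h₁.exists_next hcover (by lia)
  by_cases hb₂ : (b₂ : ℕ) + 1 = n
  · exact false_of_chain_two hpath hH hcard ho hb₂ h₁.isChord h₂.isChord ha₂ h₂.left_le h₂.lt_right
  obtain ⟨a₃, b₃, h₃, ha₃⟩ := h₂.exists_next hcover (by lia)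
  have hbeyond := fun h hh hn => h₃.exists_isChord_beyond hcover (h := h) hh hn
  have hfirst : ∀ l ≤ a₁, 0 < (l : ℕ) → ∃ x y, IsChord H x y ∧ x < l ∧ l ≤ y ∧ y < a₂ := by lia
  obtain rfl : a₃ = b₂ := le_antisymm h₃.left_le <| right_le_left_of_chord_triple hpath hH
    h₁.isChord h₂.isChord h₃.isChord ha₂ h₂.left_le ha₃ h₃.lt_right hfirst hbeyond
  obtain rfl : a₂ = b₁ := le_antisymm h₂.left_le <| right_le_left_of_chord_triple_rev hpath hH
    h₁.isChord h₂.isChord h₃.isChord ha₂ ha₃ h₃.left_le h₃.lt_right hfirst hbeyond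
  by_cases hb₃ : (b₃ : ℕ) + 1 = n
  · obtain ⟨p, q, hpq, hpqD⟩ := exists_isChord_notMem hcard {(a₁, a₂), (a₂, a₃), (a₃, b₃)}
      Finset.card_le_three
    simp only [Finset.mem_insert, Finset.mem_singleton, not_or] at hpqD
    exact false_of_three_chords hpath hH ho hb₃ h₁.isChord h₂.isChord h₃.isChord hpq hpqD.1 hpqD.2.1
      hpqD.2.2
  exact false_of_chain_four hpath hH hcover ho h₁.isChord h₂.isChord h₃ (by lia)

end Greedy

section PathNumbering

variable {V : Type*} {n : ℕ} {G : SimpleGraph V} {H : SimpleGraph (Fin n)} {R : V → V → Prop}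
  {s : V} {f : V → ℕ}

lemma cycleGraph_le_of_pathGraph_le (hpath : pathGraph n ≤ H) {o z : Fin n} (ho : (o : ℕ) = 0)
    (hz : (z : ℕ) + 1 = n) (hoz : H.Adj o z) : cycleGraph n ≤ H := by
  suffices hsub : ∀ x y : Fin n, (x - y).val = 1 → H.Adj x y from fun x y hxy =>
    (cycleGraph_adj'.1 hxy).elim (hsub x y) fun hyx => (hsub y x hyx).symm
  intro x y hxy
  rcases le_or_gt y x with hyx | hyx
  · rw [Fin.coe_sub_iff_le.2 hyx] at hxy
    exact hpath (pathGraph_adj.2 (Or.inr (by lia)))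
  · rw [Fin.coe_sub_iff_lt.2 hyx] at hxy
    rw [show x = o by lia, show y = z by lia]
    exact hoz

lemma isHamiltonian_of_cycleGraph_isContained [Fintype V] [DecidableEq V]
    (hV : 2 < Fintype.card V) (hG : cycleGraph (Fintype.card V) ⊑ G) : G.IsHamiltonian := by
  obtain ⟨v, p, hp, hlen⟩ := (cycleGraph_isContained_iff hV).1 hG
  exact fun _ => ⟨v, p, Walk.isHamiltonianCycle_iff_isCycle_and_length_eq.2 ⟨hp, hlen⟩⟩

lemma ncard_edgeSet_le (H : SimpleGraph (Fin n)) :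
    H.edgeSet.ncard ≤ (n - 1) + {c : Fin n × Fin n | IsChord H c.1 c.2}.ncard := by
  let pathEdge (i : Fin (n - 1)) : Sym2 (Fin n) := s(⟨i, by lia⟩, ⟨i + 1, by lia⟩)
  let chord (c : Fin n × Fin n) : Sym2 (Fin n) := s(c.1, c.2)
  have hsub : H.edgeSet ⊆ pathEdge '' Set.univ ∪ chord '' {c | IsChord H c.1 c.2} := by
    intro e he
    obtain ⟨x, y, hxy, rfl⟩ : ∃ x y : Fin n, x < y ∧ s(x, y) = e := by
      induction e with | h x y =>
      rcases (H.ne_of_adj he).lt_or_gt with h | h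
      exacts [⟨x, y, h, rfl⟩, ⟨y, x, h, Sym2.eq_swap⟩]
    by_cases hlen : (x : ℕ) + 1 = y
    · exact Or.inl ⟨⟨x, by lia⟩, Set.mem_univ _, by simp [pathEdge, hlen]⟩
    · exact Or.inr ⟨(x, y), ⟨he, by simp only; lia⟩, rfl⟩
  calc H.edgeSet.ncard
      ≤ (pathEdge '' Set.univ).ncard + (chord '' {c | IsChord H c.1 c.2}).ncard :=
        (Set.ncard_le_ncard hsub).trans (Set.ncard_union_le _ _)
    _ ≤ (Set.univ : Set (Fin (n - 1))).ncard + {c : Fin n × Fin n | IsChord H c.1 c.2}.ncard :=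
        add_le_add Set.ncard_image_le Set.ncard_image_le
    _ = n - 1 + {c : Fin n × Fin n | IsChord H c.1 c.2}.ncard := by
        rw [Set.ncard_univ, Nat.card_fin]

lemma IsRanking.exists_equiv [Fintype V] (hf : IsRanking R s f) :
    ∃ e : V ≃ Fin (Fintype.card V), ∀ x, (e x : ℕ) = f x := by
  let g (x : V) : Fin (Fintype.card V) := ⟨f x, hf.lt_card x⟩
  have hg : Function.Injective g := fun x y hxy => hf.injective (Fin.mk.inj_iff.1 hxy)
  exact ⟨Equiv.ofBijective g
    ((Fintype.bijective_iff_injective_and_card g).2 ⟨hg, by simp⟩), fun _ => rfl⟩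

lemma IsRanking.pathGraph_le (hf : IsRanking R s f) (hR : IsOrientation G R) (e : V ≃ Fin n)
    (he : ∀ x, (e x : ℕ) = f x) : pathGraph n ≤ G.comap e.symm := by
  suffices hstep : ∀ i j : Fin n, (i : ℕ) + 1 = j → (G.comap e.symm).Adj i j from fun i j hij =>
    (pathGraph_adj.1 hij).elim (hstep i j) fun hji => (hstep j i hji).symm
  intro i j hij
  exact hR.1 _ _ (hf.arc_of_eq_add_one (by simp only [← he, e.apply_symm_apply, hij]))

lemma IsRanking.chordsCover (hf : IsRanking R s f) (hR : IsOrientation G R)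
    (hstrong : StronglyConnected R) (e : V ≃ Fin n) (he : ∀ x, (e x : ℕ) = f x) :
    ChordsCover (G.comap e.symm) := by
  intro i hi
  obtain ⟨j, hj⟩ : ∃ j : Fin n, (i : ℕ) + 1 = j := ⟨⟨i + 1, hi⟩, rfl⟩
  obtain ⟨x, hx, y, hy, hxy⟩ := hstrong.exists_arc_of_mem_of_notMem (P := {x | i < e x})
    (u := e.symm j) (v := e.symm i) (by simp; lia) (by simp)
  rw [Set.mem_ofPred_eq] at hx hy
  refine ⟨e y, e x, ⟨by simpa using (hR.1 x y hxy).symm, ?_⟩, not_lt.1 hy, hx⟩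
  by_contra! hlen
  have hyx : R y x := hf.arc_of_eq_add_one (by rw [← he, ← he]; lia)
  exact hR.isPartialOrientation.asymm hxy hyx

end PathNumbering

theorem stmt_12 {V : Type*} [Fintype V] [DecidableEq V] (G : SimpleGraph V)
    (hn : 5 ≤ Fintype.card V) (hham : ¬ G.IsHamiltonian) (hbl : Bridgeless G)
    (hsize : Fintype.card V + 3 ≤ G.edgeSet.ncard) :
    ∃ R : V → V → Prop, IsOrientation G R ∧ DiamLE R (Fintype.card V - 2) := by
  by_contra hdiam
  obtain ⟨R, hR, hstrong⟩ := hbl.exists_isOrientation_stronglyConnected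
  obtain ⟨s, f, hf⟩ := hR.isPartialOrientation.exists_isRanking hstrong hdiam
  obtain ⟨e, he⟩ := hf.exists_equiv
  let φ : G.comap e.symm ≃g G := Iso.comap e.symm G
  have hpath : pathGraph (Fintype.card V) ≤ G.comap e.symm := hf.pathGraph_le hR e he
  have hchords : 4 ≤ {c : Fin _ × Fin _ | IsChord (G.comap e.symm) c.1 c.2}.ncard := by
    have hle := ncard_edgeSet_le (G.comap e.symm)
    have hcard : (G.comap e.symm).edgeSet.ncard = G.edgeSet.ncard :=
      Set.ncard_congr' φ.mapEdgeSet
    lia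
  refine hdiam (HasOrientationDiamLE.of_iso φ.symm (hasOrientationDiamLE_of_chordsCover hpath
    (hf.chordsCover hR hstrong e he) (fun o z ho hz hoz => hham ?_) hchords))
  exact isHamiltonian_of_cycleGraph_isContained (by lia)
    ((IsContained.of_le (cycleGraph_le_of_pathGraph_le hpath ho hz hoz)).trans φ.isContained)
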